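/- Every maximal isotropic flag in ℂ^{2l+1} lies in the K-orbit of exactly one of the l+2 flags F_+, F_-, F_0, F_1, …, F_{l-1}. In particular these flags lie in pairwise distinct K-orbits and every K-orbit contains exactly one of them. -/

import Mathlib

open Module Submodule

noncomputable section

/-- `stdVec n m` is the `m`-th standard basis vector of `ℂ^n` (1-indexed); `0` out of range. -/
def stdVec (n m : ℕ) : Fin n → ℂ :=
  if h : 1 ≤ m ∧ m ≤ n then Pi.single (⟨m - 1, by omega⟩ : Fin n) 1 else 0

/-- `stdSub n k` is the subspace `U_k = span(e_1, …, e_k)` of `ℂ^n`. -/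
def stdSub (n k : ℕ) : Submodule ℂ (Fin n → ℂ) :=
  span ℂ (stdVec n '' Set.Icc 1 k)

/-- The action of an invertible linear map of `ℂ^n` on a chain of subspaces. -/
def actFlag (n : ℕ) (g : (Fin n → ℂ) ≃ₗ[ℂ] (Fin n → ℂ))
    (V : ℕ → Submodule ℂ (Fin n → ℂ)) (k : ℕ) : Submodule ℂ (Fin n → ℂ) :=
  Submodule.map g.toLinearMap (V k)

/-- The orbit of the chain `V` under a set `B` of invertible linear maps. -/
def orbitOf (n : ℕ) (B : Set ((Fin n → ℂ) ≃ₗ[ℂ] (Fin n → ℂ)))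
    (V : ℕ → Submodule ℂ (Fin n → ℂ)) : Set (ℕ → Submodule ℂ (Fin n → ℂ)) :=
  {V' | ∃ b ∈ B, actFlag n b V = V'}

/-- The symmetric bilinear form `β(x,y) = ∑_{k=1}^n x_k y_{n+1-k}` on `ℂ^n`. -/
def betaF (n : ℕ) (x y : Fin n → ℂ) : ℂ := ∑ k : Fin n, x k * y k.rev

/-- `SO(n,ℂ)` for the form `β`. -/
def SOgrp (n : ℕ) : Set ((Fin n → ℂ) ≃ₗ[ℂ] (Fin n → ℂ)) :=
  {g | LinearMap.det g.toLinearMap = 1 ∧ ∀ x y, betaF n (g x) (g y) = betaF n x y}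

/-- A maximal isotropic flag `V 1 ⊂ ⋯ ⊂ V l` in `ℂ^n` (values pinned outside `1..l`
so that two flags are equal iff they agree in degrees `1, …, l`). -/
def IsIsoFlag (n l : ℕ) (V : ℕ → Submodule ℂ (Fin n → ℂ)) : Prop :=
  (∀ i, i ≤ l → finrank ℂ ↥(V i) = i) ∧ (∀ i, V i ≤ V (i + 1)) ∧ (∀ i, l ≤ i → V i = V l) ∧
    (∀ u ∈ V l, ∀ w ∈ V l, betaF n u w = 0)

/-- The isotropic flag `(v 1 ⊂ ⋯ ⊂ v l)` spanned by `v 1, …, v l`. -/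
def isoFlagOf (n l : ℕ) (v : ℕ → Fin n → ℂ) (k : ℕ) : Submodule ℂ (Fin n → ℂ) :=
  span ℂ (v '' Set.Icc 1 (min k l))

/-- `K = {g ∈ SO(2l+1) : g e_0 = e_0}` (here `e_0 = e_{l+1}`), a copy of `SO(2l)`. -/
def Kodd (l : ℕ) : Set ((Fin (2 * l + 1) → ℂ) ≃ₗ[ℂ] (Fin (2 * l + 1) → ℂ)) :=
  {g | g ∈ SOgrp (2 * l + 1) ∧
       g (stdVec (2 * l + 1) (l + 1)) = stdVec (2 * l + 1) (l + 1)}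

/-- `V'` lies in the `K`-orbit of `V`. -/
def InKOddOrbit (l : ℕ) (V V' : ℕ → Submodule ℂ (Fin (2 * l + 1) → ℂ)) : Prop :=
  ∃ g ∈ Kodd l, actFlag (2 * l + 1) g V = V'

/-- The vector `e_l + √2 ı e_0 + e_{-l}` in `ℂ^{2l+1}`. -/
def wvec (l : ℕ) : Fin (2 * l + 1) → ℂ :=
  stdVec (2 * l + 1) l + ((Real.sqrt 2 : ℂ) * Complex.I) • stdVec (2 * l + 1) (l + 1) +
    stdVec (2 * l + 1) (l + 2)

/-- Representatives of the `K`-orbits: for `i ≤ l - 1` this gives the flag `F_i`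
`(e_1 ⊂ ⋯ ⊂ e_i ⊂ e_l + √2 ı e_0 + e_{-l} ⊂ e_{i+1} ⊂ ⋯ ⊂ e_{l-1})`, for `i = l` the
flag `F_+ = (e_1 ⊂ ⋯ ⊂ e_l)`, and for `i = l + 1` the flag
`F_- = (e_1 ⊂ ⋯ ⊂ e_{l-1} ⊂ e_{-l})`. -/
def repSOVec (l i m : ℕ) : Fin (2 * l + 1) → ℂ :=
  if i ≤ l - 1 then
    (if m ≤ i then stdVec (2 * l + 1) m
     else if m = i + 1 then wvec l
     else stdVec (2 * l + 1) (m - 1))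
  else if i = l then stdVec (2 * l + 1) m
  else if m ≤ l - 1 then stdVec (2 * l + 1) m else stdVec (2 * l + 1) (l + 2)

def repSOFlag (l i : ℕ) : ℕ → Submodule ℂ (Fin (2 * l + 1) → ℂ) :=
  isoFlagOf (2 * l + 1) l (repSOVec l i)

/-! ### The bilinear form -/

lemma stdVec_apply (n m : ℕ) (k : Fin n) :
    stdVec n m k = if (k : ℕ) + 1 = m then 1 else 0 := by
  unfold stdVec
  split_ifs with h1 h2 h2
  · have : k = ⟨m - 1, by omega⟩ := by ext; simp; omega
    rw [← this]; simp
  · rw [Pi.single_apply, if_neg]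
    intro h; apply h2; rw [h]; simp; omega
  · exfalso; apply h1; have := k.2; omega
  · rfl

lemma stdVec_eq_single (n : ℕ) (k : Fin n) : stdVec n (k + 1) = Pi.single k 1 := by
  ext j
  rw [stdVec_apply, Pi.single_apply]
  congr 1
  simp [Fin.ext_iff]

/-- The form `β` as a Mathlib bilinear form. -/
def Bf (n : ℕ) : LinearMap.BilinForm ℂ (Fin n → ℂ) :=
  LinearMap.mk₂ ℂ (betaF n)
    (by intro x y z; simp [betaF, add_mul, Finset.sum_add_distrib])
    (by intro c x y; simp [betaF, Finset.mul_sum, mul_assoc])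
    (by intro x y z; simp [betaF, mul_add, Finset.sum_add_distrib])
    (by intro c x y; simp [betaF, Finset.mul_sum]; congr 1; ext; ring)

lemma Bf_apply (n : ℕ) (x y) : Bf n x y = betaF n x y := rfl

lemma Bf_comm (n : ℕ) (x y) : Bf n x y = Bf n y x := by
  simp only [Bf_apply, betaF]
  rw [← Equiv.sum_comp Fin.revPerm]
  simp [mul_comm]

lemma Bf_single_right (n : ℕ) (x) (k : Fin n) : Bf n x (Pi.single k 1) = x k.rev := by
  simp only [Bf_apply, betaF]
  rw [Finset.sum_eq_single k.rev]
  · simp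
  · intro b _ hb
    rw [Pi.single_eq_of_ne, mul_zero]
    intro h; apply hb; rw [← h, Fin.rev_rev]
  · simp

lemma Bf_single_left (n : ℕ) (x) (k : Fin n) : Bf n (Pi.single k 1) x = x k.rev := by
  rw [Bf_comm, Bf_single_right]

lemma Bf_sep (n : ℕ) (x) (h : ∀ y, Bf n x y = 0) : x = 0 := by
  ext k
  have := h (Pi.single k.rev 1)
  rw [Bf_single_right, Fin.rev_rev] at this
  simpa using this

lemma Bf_nondeg (n : ℕ) : (Bf n).Nondegenerate := by
  refine ⟨fun x h => Bf_sep n x h, fun x h => Bf_sep n x fun y => ?_⟩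
  rw [Bf_comm]; exact h y

/-- prescribe pairings with a linearly independent family -/
lemma exists_pair {n : ℕ} {κ : Type*} {y : κ → Fin n → ℂ}
    (hy : LinearIndependent ℂ y) (c : κ → ℂ) : ∃ w, ∀ k, Bf n w (y k) = c k := by
  classical
  obtain ⟨φ, hφ⟩ := LinearMap.exists_extend (((Basis.span hy).constr ℂ) c)
  refine ⟨((Bf n).toDual (Bf_nondeg n)).symm φ, fun k => ?_⟩
  have h1 : Bf n (((Bf n).toDual (Bf_nondeg n)).symm φ) = φ :=
    ((Bf n).toDual (Bf_nondeg n)).apply_symm_apply φ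
  rw [h1]
  have h2 := LinearMap.congr_fun hφ (Basis.span hy k)
  rw [Basis.constr_basis] at h2
  simpa [Basis.span_apply] using h2

/-- Isotropic partners. -/
lemma exists_partner {n : ℕ} {ι κ : Type*} [Fintype ι] [Fintype κ] [DecidableEq ι]
    [DecidableEq κ] (v : ι → Fin n → ℂ) (X : κ → Fin n → ℂ) (d : κ → ℂ) (hd : ∀ k, d k ≠ 0)
    (hv : LinearIndependent ℂ v) (hvv : ∀ i j, Bf n (v i) (v j) = 0)
    (hvX : ∀ i k, Bf n (v i) (X k) = 0)
    (hXX : ∀ k k', Bf n (X k) (X k') = if k = k' then d k else 0) :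
    ∃ v' : ι → Fin n → ℂ, (∀ i j, Bf n (v i) (v' j) = if i = j then 1 else 0) ∧
      (∀ i j, Bf n (v' i) (v' j) = 0) ∧ (∀ i k, Bf n (v' i) (X k) = 0) := by
  have hli : LinearIndependent ℂ (Sum.elim v X) := by
    rw [Fintype.linearIndependent_iff] at hv ⊢
    intro c hc
    rw [Fintype.sum_sum_type] at hc
    simp only [Sum.elim_inl, Sum.elim_inr] at hc
    have h2 : ∀ k, c (Sum.inr k) = 0 := by
      intro k
      have := congrArg (fun z => Bf n z (X k)) hc
      simp [hvX, hXX] at this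
      exact this.resolve_right (hd k)
    have h1 : ∀ i, c (Sum.inl i) = 0 := by
      apply hv
      simpa [h2] using hc
    rintro (i | k)
    · exact h1 i
    · exact h2 k
  have hw : ∀ j : ι, ∃ w, (∀ i, Bf n w (v i) = if i = j then 1 else 0) ∧
      ∀ k, Bf n w (X k) = 0 := by
    intro j
    obtain ⟨w, hw⟩ := exists_pair hli (Sum.elim (fun i => if i = j then 1 else 0) (fun _ => 0))
    exact ⟨w, fun i => hw (Sum.inl i), fun k => hw (Sum.inr k)⟩
  choose w hw1 hw2 using hw
  have hw1' : ∀ i j, Bf n (v i) (w j) = if i = j then 1 else 0 := by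
    intro i j; rw [Bf_comm, hw1]
  refine ⟨fun j => w j - (1 / 2 : ℂ) • ∑ k, Bf n (w j) (w k) • v k, ?_, ?_, ?_⟩
  · intro i j
    simp [hvv, hw1']
  · intro i j
    simp [hvv, hw1', hw1]
    rw [Bf_comm n (w j) (w i)]; ring
  · intro i k
    simp [hvX, hw2]

/-- isometry of β -/
def IsIsom (n : ℕ) (g : (Fin n → ℂ) ≃ₗ[ℂ] (Fin n → ℂ)) : Prop :=
  ∀ x y, Bf n (g x) (g y) = Bf n x y

lemma isom_det_sq (n : ℕ) (g) (hg : IsIsom n g) :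
    LinearMap.det g.toLinearMap = 1 ∨ LinearMap.det g.toLinearMap = -1 := by
  set M := LinearMap.toMatrix' g.toLinearMap with hM
  set P : Matrix (Fin n) (Fin n) ℂ := Equiv.Perm.permMatrix ℂ Fin.revPerm with hP
  have h : M.transpose * P * M = P := by
    ext i j
    have h1 := hg (Pi.single i 1) (Pi.single j 1)
    rw [Bf_single_right] at h1
    have h2 : P i j = (Pi.single i (1 : ℂ) : Fin n → ℂ) j.rev := by
      simp [hP, Equiv.Perm.permMatrix, PEquiv.toMatrix_apply, Pi.single_apply]
      congr 1
      rw [Fin.rev_eq_iff]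
      exact propext eq_comm
    rw [h2, ← h1, Matrix.mul_assoc, Matrix.mul_apply, Bf_apply, betaF]
    refine Finset.sum_congr rfl fun k _ => ?_
    have h3 : (P * M) k j = M k.rev j := by
      have : (P * M) k j = (P.mulVec (fun a => M a j)) k := rfl
      rw [this, hP, Matrix.permMatrix_mulVec]; rfl
    rw [h3, hM]
    simp [LinearMap.toMatrix'_apply]
  have h4 := congrArg Matrix.det h
  rw [Matrix.det_mul, Matrix.det_mul, Matrix.det_transpose] at h4
  have hPd : P.det ≠ 0 := by
    rw [hP, Matrix.det_permutation]
    rcases Int.units_eq_one_or (Equiv.Perm.sign (Fin.revPerm : Equiv.Perm (Fin n))) with h | h <;>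
      simp [h]
  have h5 : M.det * M.det = 1 := by
    apply mul_right_cancel₀ hPd
    linear_combination h4
  rw [hM, LinearMap.det_toMatrix'] at h5
  exact mul_self_eq_one_iff.mp h5

/-! ### The index equivalence -/

abbrev Idx (l : ℕ) := Fin l ⊕ (Unit ⊕ Fin l)

def idxFun (l : ℕ) : Idx l → Fin (2 * l + 1) :=
  Sum.elim (fun i => ⟨i, by omega⟩)
    (Sum.elim (fun _ => ⟨l, by omega⟩) (fun i => ⟨2 * l - i, by omega⟩))

lemma idxFun_bij (l : ℕ) : Function.Bijective (idxFun l) := by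
  rw [Fintype.bijective_iff_injective_and_card]
  constructor
  · rintro (i | i | i) (j | j | j) h <;> simp [idxFun, Fin.ext_iff] at h ⊢ <;> omega
  · simp; omega

def idx (l : ℕ) : Idx l ≃ Fin (2 * l + 1) := Equiv.ofBijective _ (idxFun_bij l)

lemma idx_inl (l : ℕ) (i : Fin l) : ((idx l (Sum.inl i) : Fin _) : ℕ) = i := rfl
lemma idx_mid (l : ℕ) (u : Unit) : ((idx l (Sum.inr (Sum.inl u)) : Fin _) : ℕ) = l := rfl
lemma idx_inr (l : ℕ) (i : Fin l) : ((idx l (Sum.inr (Sum.inr i)) : Fin _) : ℕ) = 2 * l - i := rfl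

/-- the dual index -/
def dualIdx (l : ℕ) : Idx l → Idx l :=
  Sum.elim (fun i => Sum.inr (Sum.inr i))
    (Sum.elim (fun _ => Sum.inr (Sum.inl ())) (fun i => Sum.inl i))

lemma idx_rev (l : ℕ) (a : Idx l) : (idx l a).rev = idx l (dualIdx l a) := by
  rcases a with i | i | i <;> ext <;> simp [Fin.val_rev, idx_inl, idx_mid, idx_inr, dualIdx] <;>
    omega

/-- Construct an isometry from a Witt basis. -/
lemma exists_isom (l : ℕ) (b : Idx l → Fin (2 * l + 1) → ℂ)
    (hb : ∀ a a', Bf _ (b a) (b a') = if a' = dualIdx l a then 1 else 0) :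
    ∃ g, IsIsom (2 * l + 1) g ∧ ∀ a, g (Pi.single (idx l a) 1) = b a := by
  set E : Basis (Idx l) ℂ (Fin (2 * l + 1) → ℂ) := (Pi.basisFun ℂ _).reindex (idx l).symm with hE
  have hEa : ∀ a, E a = Pi.single (idx l a) 1 := by intro a; simp [hE]
  set f := E.constr ℂ b with hf
  have hfa : ∀ a, f (E a) = b a := by intro a; rw [hf, Basis.constr_basis]
  have hiso : ∀ x y, Bf _ (f x) (f y) = Bf _ x y := by
    have : (Bf (2 * l + 1)).comp f f = Bf (2 * l + 1) := by
      apply LinearMap.BilinForm.ext_basis E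
      intro a a'
      rw [LinearMap.BilinForm.comp_apply, hfa, hfa, hb, hEa, hEa, Bf_single_left, idx_rev,
        Pi.single_apply]
      congr 1
      simp [eq_comm]
    intro x y
    rw [← LinearMap.BilinForm.comp_apply, this]
  have hinj : Function.Injective f := by
    rw [← LinearMap.ker_eq_bot, LinearMap.ker_eq_bot']
    intro x hx
    apply Bf_sep
    intro y
    rw [← hiso, hx]; simp
  refine ⟨LinearEquiv.ofInjectiveEndo f hinj, fun x y => ?_, fun a => ?_⟩
  · exact hiso x y
  · rw [← hEa]; exact hfa a

/-! ### Standard vectors -/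

abbrev e0 (l : ℕ) : Fin (2 * l + 1) → ℂ := stdVec (2 * l + 1) (l + 1)

lemma single_inl (l : ℕ) (i : Fin l) :
    (Pi.single (idx l (Sum.inl i)) 1 : Fin (2 * l + 1) → ℂ) = stdVec (2 * l + 1) (i + 1) := by
  rw [← stdVec_eq_single, idx_inl]

lemma single_mid (l : ℕ) (u : Unit) :
    (Pi.single (idx l (Sum.inr (Sum.inl u))) 1 : Fin (2 * l + 1) → ℂ) = e0 l := by
  rw [← stdVec_eq_single, idx_mid]

lemma single_inr (l : ℕ) (i : Fin l) :
    (Pi.single (idx l (Sum.inr (Sum.inr i))) 1 : Fin (2 * l + 1) → ℂ) =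
      stdVec (2 * l + 1) (2 * l - i + 1) := by
  rw [← stdVec_eq_single, idx_inr]

lemma Bf_e0 (l : ℕ) (x) : Bf _ x (e0 l) = x ⟨l, by omega⟩ := by
  rw [← single_mid l (), Bf_single_right, idx_rev]
  rfl

lemma e0_apply (l : ℕ) : e0 l ⟨l, by omega⟩ = 1 := by
  rw [e0, stdVec_apply]; simp

lemma Bf_e0_e0 (l : ℕ) : Bf _ (e0 l) (e0 l) = 1 := by
  rw [Bf_e0, e0_apply]

/-- isometry from a hyperbolic family in `H`. -/
lemma exists_isom_of_pairs (l : ℕ) (v v' : Fin l → Fin (2 * l + 1) → ℂ)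
    (hvv : ∀ i j, Bf _ (v i) (v j) = 0) (hvv' : ∀ i j, Bf _ (v' i) (v' j) = 0)
    (hp : ∀ i j, Bf _ (v i) (v' j) = if i = j then 1 else 0)
    (h0 : ∀ i, Bf _ (v i) (e0 l) = 0) (h0' : ∀ i, Bf _ (v' i) (e0 l) = 0) :
    ∃ g, IsIsom (2 * l + 1) g ∧ g (e0 l) = e0 l ∧
      (∀ i : Fin l, g (stdVec _ (i + 1)) = v i) ∧
      ∀ i : Fin l, g (stdVec _ (2 * l - i + 1)) = v' i := by
  obtain ⟨g, hg, hgb⟩ := exists_isom l (Sum.elim v (Sum.elim (fun _ => e0 l) v')) (by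
    rintro (i | i | i) (j | j | j)
    · simp [dualIdx, hvv]
    · simp [dualIdx, h0]
    · simp [dualIdx, hp, eq_comm]
    · simp only [dualIdx, Sum.elim_inr, Sum.elim_inl]
      rw [Bf_comm]; simp [h0]
    · simp only [dualIdx, Sum.elim_inr, Sum.elim_inl]
      rw [Bf_e0_e0]; simp
    · simp only [dualIdx, Sum.elim_inr, Sum.elim_inl]
      rw [Bf_comm]; simp [h0']
    · simp only [dualIdx, Sum.elim_inr, Sum.elim_inl]
      rw [Bf_comm, hp]; simp
    · simp [dualIdx, h0']
    · simp [dualIdx, hvv'])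
  refine ⟨g, hg, ?_, fun i => ?_, fun i => ?_⟩
  · have := hgb (Sum.inr (Sum.inl ()))
    rwa [single_mid] at this
  · have := hgb (Sum.inl i)
    rwa [single_inl] at this
  · have := hgb (Sum.inr (Sum.inr i))
    rwa [single_inr] at this

/-- closed case -/
lemma exists_isom_closed (l : ℕ) (v : Fin l → Fin (2 * l + 1) → ℂ)
    (hv : LinearIndependent ℂ v)
    (hvv : ∀ i j, Bf _ (v i) (v j) = 0) (h0 : ∀ i, Bf _ (v i) (e0 l) = 0) :
    ∃ g, IsIsom (2 * l + 1) g ∧ g (e0 l) = e0 l ∧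
      (∀ i : Fin l, g (stdVec _ (i + 1)) = v i) := by
  obtain ⟨v', h1, h2, h3⟩ := exists_partner v (fun _ : Unit => e0 l) (fun _ => 1)
    (by simp) hv hvv (fun i _ => h0 i) (by intro k k'; simp [Bf_e0_e0])
  obtain ⟨g, hg, hg0, hgv, -⟩ := exists_isom_of_pairs l v v' hvv h2 h1 h0 (fun i => h3 i ())
  exact ⟨g, hg, hg0, hgv⟩

/-- the remaining direction -/
lemma exists_t (m : ℕ) (v v' : Fin m → Fin (2 * (m + 1) + 1) → ℂ) (u : Fin (2 * (m + 1) + 1) → ℂ)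
    (hvv : ∀ i j, Bf _ (v i) (v j) = 0) (hvv' : ∀ i j, Bf _ (v' i) (v' j) = 0)
    (hp : ∀ i j, Bf _ (v i) (v' j) = if i = j then 1 else 0)
    (h0 : ∀ i, Bf _ (v i) (e0 _) = 0) (h0' : ∀ i, Bf _ (v' i) (e0 _) = 0)
    (hu : ∀ i, Bf _ (v i) u = 0) (hu' : ∀ i, Bf _ (v' i) u = 0)
    (hu0 : Bf _ u (e0 _) = 0) (huu : Bf _ u u = 2) :
    ∃ t, (∀ i, Bf _ (v i) t = 0) ∧ (∀ i, Bf _ (v' i) t = 0) ∧ Bf _ (e0 _) t = 0 ∧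
      Bf _ u t = 0 ∧ Bf _ t t = -2 := by
  have hp' : ∀ i j, Bf _ (v' i) (v j) = if i = j then 1 else 0 := by
    intro i j; rw [Bf_comm, hp]; simp [eq_comm]
  have h0u : Bf _ (e0 _) u = 0 := by rw [Bf_comm, hu0]
  let N := 2 * (m + 1) + 1
  let fam : (Fin m ⊕ Fin m) ⊕ Fin 2 → Fin N → ℂ := Sum.elim (Sum.elim v v') ![e0 _, u]
  let f : (Fin N → ℂ) →ₗ[ℂ] ((Fin m ⊕ Fin m) ⊕ Fin 2 → ℂ) := LinearMap.pi fun a => Bf N (fam a)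
  have hker : f.ker ≠ ⊥ := by
    apply LinearMap.ker_ne_bot_of_finrank_lt
    simp [N]; omega
  obtain ⟨t, ht, ht0⟩ := (Submodule.ne_bot_iff _).mp hker
  have hfam : ∀ a, Bf N (fam a) t = 0 := fun a => congrFun (LinearMap.mem_ker.mp ht) a
  have t1 : ∀ i, Bf N (v i) t = 0 := fun i => hfam (Sum.inl (Sum.inl i))
  have t2 : ∀ i, Bf N (v' i) t = 0 := fun i => hfam (Sum.inl (Sum.inr i))
  have t3 : Bf N (e0 _) t = 0 := hfam (Sum.inr 0)
  have t4 : Bf N u t = 0 := hfam (Sum.inr 1)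
  have t1' : ∀ i, Bf N t (v i) = 0 := fun i => by rw [Bf_comm, t1]
  have t2' : ∀ i, Bf N t (v' i) = 0 := fun i => by rw [Bf_comm, t2]
  have t3' : Bf N t (e0 _) = 0 := by rw [Bf_comm, t3]
  have t4' : Bf N t u = 0 := by rw [Bf_comm, t4]
  have htt : Bf N t t ≠ 0 := by
    intro htt
    have hli : LinearIndependent ℂ (Sum.elim fam (fun _ : Unit => t)) := by
      rw [Fintype.linearIndependent_iff]
      intro c hc
      simp only [Fintype.sum_sum_type, Sum.elim_inl, Sum.elim_inr, fam, Fin.sum_univ_two,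
        Matrix.cons_val_zero, Matrix.cons_val_one, Finset.univ_unique, Finset.sum_singleton] at hc
      have c1 : ∀ i, c (Sum.inl (Sum.inl (Sum.inl i))) = 0 := by
        intro i
        have := congrArg (fun z => Bf N z (v' i)) hc
        simpa [N, hp, hvv', Bf_comm _ _ (v' i), h0', hu', t2] using this
      have c2 : ∀ i, c (Sum.inl (Sum.inl (Sum.inr i))) = 0 := by
        intro i
        have := congrArg (fun z => Bf N z (v i)) hc
        simpa [N, hp', hvv, Bf_comm _ _ (v i), h0, hu, t1] using this
      have c3 : c (Sum.inl (Sum.inr 0)) = 0 := by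
        have := congrArg (fun z => Bf N z (e0 _)) hc
        simpa [N, h0, h0', Bf_e0_e0, hu0, t3'] using this
      have c4 : c (Sum.inl (Sum.inr 1)) = 0 := by
        have := congrArg (fun z => Bf N z u) hc
        simpa [N, hu, hu', h0u, huu, t4'] using this
      have c5 : c (Sum.inr ()) = 0 := by
        have h := hc
        simp [c1, c2, c3, c4] at h
        exact h.resolve_right ht0
      rintro (((i | i) | i) | i)
      · exact c1 i
      · exact c2 i
      · fin_cases i
        · exact c3
        · exact c4
      · exact c5
    have hspan := hli.span_eq_top_of_card_eq_finrank (by simp [N]; omega)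
    apply ht0
    apply Bf_sep N
    intro y
    have hy : y ∈ span ℂ (Set.range (Sum.elim fam (fun _ : Unit => t))) := by
      rw [hspan]; trivial
    induction hy using Submodule.span_induction with
    | mem x hx =>
      obtain ⟨a, rfl⟩ := hx
      rcases a with a | a
      · rw [Bf_comm]; exact hfam a
      · exact htt
    | zero => simp
    | add x y _ _ hx hy => simp [hx, hy]
    | smul c x _ hx => simp [hx]
  obtain ⟨z, hz⟩ := IsAlgClosed.exists_pow_nat_eq (-2 / Bf N t t) (n := 2) (by norm_num)
  refine ⟨z • t, ?_, ?_, ?_, ?_, ?_⟩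
  · intro i; rw [map_smul]; erw [t1]; simp
  · intro i; rw [map_smul]; erw [t2]; simp
  · rw [map_smul]; erw [t3]; simp
  · rw [map_smul]; erw [t4]; simp
  · have : Bf N (z • t) (z • t) = z ^ 2 * Bf N t t := by simp; ring
    erw [this]; rw [hz]; field_simp

/-- open case -/
lemma exists_isom_open (m : ℕ) (v : Fin m → Fin (2 * (m + 1) + 1) → ℂ)
    (u : Fin (2 * (m + 1) + 1) → ℂ) (hv : LinearIndependent ℂ v)
    (hvv : ∀ i j, Bf _ (v i) (v j) = 0) (h0 : ∀ i, Bf _ (v i) (e0 _) = 0)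
    (hu : ∀ i, Bf _ (v i) u = 0) (hu0 : Bf _ u (e0 _) = 0) (huu : Bf _ u u = 2) :
    ∃ g, IsIsom (2 * (m + 1) + 1) g ∧ g (e0 _) = e0 _ ∧
      (∀ i : Fin m, g (stdVec _ (i + 1)) = v i) ∧
      g (stdVec _ (m + 1)) + g (stdVec _ (m + 1 + 2)) = u := by
  have h0u : Bf _ (e0 _) u = 0 := by rw [Bf_comm, hu0]
  obtain ⟨v', hp, hvv', hX⟩ := exists_partner v ![e0 (m + 1), u] ![1, 2]
    (by intro k; fin_cases k <;> simp) hv hvv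
    (by intro i k; fin_cases k; exacts [h0 i, hu i])
    (by intro k k'; fin_cases k <;> fin_cases k' <;> simp [Bf_e0_e0, h0u, hu0, huu])
  have h0' : ∀ i, Bf _ (v' i) (e0 _) = 0 := fun i => hX i 0
  have hu' : ∀ i, Bf _ (v' i) u = 0 := fun i => hX i 1
  obtain ⟨t, t1, t2, t3, t4, t5⟩ := exists_t m v v' u hvv hvv' hp h0 h0' hu hu' hu0 huu
  have hp' : ∀ i j, Bf _ (v' i) (v j) = if i = j then 1 else 0 := by
    intro i j; rw [Bf_comm, hp]; simp [eq_comm]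
  have t3' : Bf _ t (e0 _) = 0 := by rw [Bf_comm, t3]
  have t4' : Bf _ t u = 0 := by rw [Bf_comm, t4]
  have sv : ∀ x i, Bf _ x (v i) = Bf _ (v i) x := fun x i => Bf_comm _ _ _
  have sv' : ∀ x i, Bf _ x (v' i) = Bf _ (v' i) x := fun x i => Bf_comm _ _ _
  set p := (1 / 2 : ℂ) • (u + t) with hpdef
  set q := (1 / 2 : ℂ) • (u - t) with hqdef
  obtain ⟨g, hg, hg0, hg1, hg2⟩ := exists_isom_of_pairs (m + 1)
    (Fin.snoc (α := fun _ => Fin (2 * (m + 1) + 1) → ℂ) v p)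
    (Fin.snoc (α := fun _ => Fin (2 * (m + 1) + 1) → ℂ) v' q)
    (by
      intro i j
      induction i using Fin.lastCases <;> induction j using Fin.lastCases
      · simp [hpdef, huu, t4, t4', t5]
      · simp only [Fin.snoc_last, Fin.snoc_castSucc]; rw [Bf_comm]; simp [hpdef, hu, t1]
      · simp only [Fin.snoc_last, Fin.snoc_castSucc]; simp [hpdef, hu, t1]
      · simp only [Fin.snoc_castSucc]; exact hvv _ _)
    (by
      intro i j
      induction i using Fin.lastCases <;> induction j using Fin.lastCases
      · simp [hqdef, huu, t4, t4', t5]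
      · simp only [Fin.snoc_last, Fin.snoc_castSucc]; rw [Bf_comm]; simp [hqdef, hu', t2]
      · simp only [Fin.snoc_last, Fin.snoc_castSucc]; simp [hqdef, hu', t2]
      · simp only [Fin.snoc_castSucc]; exact hvv' _ _)
    (by
      intro i j
      induction i using Fin.lastCases <;> induction j using Fin.lastCases
      · simp [hpdef, hqdef, huu, t4, t4', t5]; norm_num
      · simp only [Fin.snoc_last, Fin.snoc_castSucc]; rw [Bf_comm]
        simp [hpdef, hu', t2, Fin.ext_iff]; omega
      · simp only [Fin.snoc_last, Fin.snoc_castSucc]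
        simp [hqdef, hu, t1, Fin.ext_iff]; omega
      · simp only [Fin.snoc_castSucc, hp]; simp)
    (by
      intro i
      induction i using Fin.lastCases
      · simp [hpdef, hu0, t3']
      · simp only [Fin.snoc_castSucc]; exact h0 _)
    (by
      intro i
      induction i using Fin.lastCases
      · simp [hqdef, hu0, t3']
      · simp only [Fin.snoc_castSucc]; exact h0' _)
  refine ⟨g, hg, hg0, fun i => ?_, ?_⟩
  · have := hg1 i.castSucc
    simpa using this
  · have h1 := hg1 (Fin.last m)
    have h2 := hg2 (Fin.last m)
    simp only [Fin.val_last, Fin.snoc_last] at h1 h2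
    have : 2 * (m + 1) - m + 1 = m + 1 + 2 := by omega
    rw [this] at h2
    rw [h1, h2, hpdef, hqdef, ← smul_add]
    ext k; simp; ring

/-! ### The reflection exchanging `e_l` and `e_{-l}` -/

def swp (m : ℕ) : Equiv.Perm (Fin (2 * (m + 1) + 1)) :=
  Equiv.swap ⟨m, by omega⟩ ⟨m + 2, by omega⟩

lemma swp_val (m : ℕ) (k : Fin (2 * (m + 1) + 1)) :
    ((swp m k : Fin _) : ℕ) =
      if (k : ℕ) = m then m + 2 else if (k : ℕ) = m + 2 then m else (k : ℕ) := by
  unfold swp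
  rw [Equiv.swap_apply_def]
  simp only [Fin.ext_iff]
  split_ifs <;> rfl

def sw (m : ℕ) : (Fin (2 * (m + 1) + 1) → ℂ) ≃ₗ[ℂ] (Fin (2 * (m + 1) + 1) → ℂ) :=
  LinearEquiv.funCongrLeft ℂ ℂ (swp m)

lemma sw_apply (m : ℕ) (x) (k) : sw m x k = x (swp m k) := rfl

lemma sw_std (m j : ℕ) : sw m (stdVec _ j) =
    stdVec _ (if j = m + 1 then m + 3 else if j = m + 3 then m + 1 else j) := by
  ext k
  rw [sw_apply, stdVec_apply, stdVec_apply, swp_val]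
  congr 1
  apply propext
  split_ifs <;> omega

lemma sw_sw (m : ℕ) (x) : sw m (sw m x) = x := by
  ext k
  rw [sw_apply, sw_apply]
  simp [swp]

lemma sw_isom (m : ℕ) : IsIsom _ (sw m) := by
  intro x y
  simp only [Bf_apply, betaF, sw_apply]
  rw [← Equiv.sum_comp (swp m) (fun k => x k * y k.rev)]
  refine Finset.sum_congr rfl fun k _ => ?_
  congr 2
  ext
  rw [swp_val, Fin.val_rev, Fin.val_rev, swp_val]
  have := k.2
  split_ifs <;> omega

lemma sw_det (m : ℕ) : LinearMap.det (sw m).toLinearMap = -1 := by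
  have h : (sw m).toLinearMap = Matrix.toLin' (Equiv.Perm.permMatrix ℂ (swp m)) := by
    apply LinearMap.ext
    intro x
    rw [Matrix.toLin'_apply, Matrix.permMatrix_mulVec]
    rfl
  rw [h, LinearMap.det_toLin', Matrix.det_permutation, swp, Equiv.Perm.sign_swap]
  · simp
  · simp [Fin.ext_iff]

lemma sw_e0 (m : ℕ) : sw m (e0 (m + 1)) = e0 (m + 1) := by
  rw [e0, sw_std]; simp

lemma isom_K (m : ℕ) (g) (hg : IsIsom (2 * (m + 1) + 1) g) (hg0 : g (e0 _) = e0 _) :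
    g ∈ Kodd (m + 1) ∨ (sw m).trans g ∈ Kodd (m + 1) := by
  rcases isom_det_sq _ g hg with h | h
  · exact Or.inl ⟨⟨h, hg⟩, hg0⟩
  · refine Or.inr ⟨⟨?_, fun x y => ?_⟩, ?_⟩
    · rw [LinearEquiv.coe_trans, LinearMap.det_comp, h, sw_det]; norm_num
    · exact (hg _ _).trans (sw_isom m x y)
    · change g (sw m (e0 _)) = _
      rw [sw_e0, hg0]

/-! ### Stabilizer of the standard flag has determinant one -/

lemma det_eq_one (l : ℕ) (g) (hg : IsIsom (2 * l + 1) g) (hg0 : g (e0 l) = e0 l)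
    (hE : ∀ (i : Fin l) (k : Fin (2 * l + 1)), l ≤ (k : ℕ) → g (stdVec _ (i + 1)) k = 0) :
    LinearMap.det g.toLinearMap = 1 := by
  set M := (LinearMap.toMatrix' g.toLinearMap).submatrix (idx l) (idx l) with hM
  have hMa : ∀ a b, M a b = g (Pi.single (idx l b) 1) (idx l a) := by
    intro a b
    simp [hM, LinearMap.toMatrix'_apply]
  set A : Matrix (Fin l) (Fin l) ℂ := Matrix.of fun i j => M (Sum.inl i) (Sum.inl j) with hA
  set D : Matrix (Fin l) (Fin l) ℂ :=
    Matrix.of fun i j => M (Sum.inr (Sum.inr i)) (Sum.inr (Sum.inr j)) with hD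
  have hmid : ∀ u : Unit, idx l (Sum.inr (Sum.inl u)) = ⟨l, by omega⟩ := fun u => rfl
  have hblock : M = Matrix.fromBlocks A (Matrix.of fun i b => M (Sum.inl i) (Sum.inr b)) 0
      (Matrix.fromBlocks 1 0 0 D) := by
    ext a b
    rcases a with i | i | i <;> rcases b with j | j | j
    · rfl
    · rfl
    · rfl
    · simp only [Matrix.fromBlocks_apply₂₁, Matrix.zero_apply]
      rw [hMa, single_inl]
      exact hE _ _ (le_of_eq (idx_mid l i).symm)
    · simp only [Matrix.fromBlocks_apply₂₂, Matrix.fromBlocks_apply₁₁]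
      rw [hMa, single_mid, hg0, hmid, e0_apply]; simp
    · simp only [Matrix.fromBlocks_apply₂₂, Matrix.fromBlocks_apply₁₂, Matrix.zero_apply]
      rw [hMa, hmid, ← Bf_e0 l (g _)]
      conv_lhs => rw [← hg0]
      rw [hg, Bf_e0, ← hmid (), Pi.single_apply, if_neg]
      simp
    · simp only [Matrix.fromBlocks_apply₂₁, Matrix.zero_apply]
      rw [hMa, single_inl]
      apply hE
      rw [idx_inr]; omega
    · simp only [Matrix.fromBlocks_apply₂₂, Matrix.fromBlocks_apply₂₁, Matrix.zero_apply]
      rw [hMa, single_mid, hg0, ← single_mid l (), Pi.single_apply, if_neg]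
      simp
    · rfl
  have hAD : A.transpose * D = 1 := by
    ext i j
    have h1 := hg (Pi.single (idx l (Sum.inl i)) 1) (Pi.single (idx l (Sum.inr (Sum.inr j))) 1)
    rw [Bf_single_right, idx_rev, Bf_apply, betaF, ← Equiv.sum_comp (idx l)] at h1
    simp only [Fintype.sum_sum_type, idx_rev] at h1
    have z1 : ∀ u : Unit, g (Pi.single (idx l (Sum.inl i)) 1) (idx l (Sum.inr (Sum.inl u))) = 0 := by
      intro u
      rw [single_inl]
      exact hE _ _ (le_of_eq (idx_mid l u).symm)
    have z2 : ∀ k : Fin l,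
        g (Pi.single (idx l (Sum.inl i)) 1) (idx l (Sum.inr (Sum.inr k))) = 0 := by
      intro k
      rw [single_inl]
      apply hE
      rw [idx_inr]; omega
    simp only [z1, z2, zero_mul, Finset.sum_const_zero, add_zero] at h1
    rw [Matrix.mul_apply]
    simp only [Matrix.transpose_apply, Matrix.of_apply, hA, hD, hMa]
    refine h1.trans ?_
    rw [Pi.single_apply, Matrix.one_apply]
    simp [dualIdx, eq_comm]
  have h2 : A.det * D.det = 1 := by
    rw [← Matrix.det_transpose A, ← Matrix.det_mul, hAD, Matrix.det_one]
  have h3 : M.det = 1 := by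
    rw [hblock, Matrix.det_fromBlocks_zero₂₁, Matrix.det_fromBlocks_zero₂₁, Matrix.det_one,
      one_mul, h2]
  rw [hM, Matrix.det_submatrix_equiv_self, LinearMap.det_toMatrix'] at h3
  exact h3

/-! ### Adapted bases of flags -/

lemma flag_span {n l : ℕ} {V : ℕ → Submodule ℂ (Fin n → ℂ)} (hV : IsIsoFlag n l V)
    (x : ℕ → Fin n → ℂ) (hx : ∀ k, k < l → x (k + 1) ∈ V (k + 1) ∧ x (k + 1) ∉ V k) :
    ∀ k, k ≤ l → V k = span ℂ (x '' Set.Icc 1 k) := by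
  intro k
  induction k with
  | zero =>
    intro h
    have := hV.1 0 h
    rw [Submodule.finrank_eq_zero] at this
    simp [this]
  | succ k ih =>
    intro h
    have ihk := ih (by omega)
    have hk := hx k (by omega)
    have hI : Set.Icc 1 (k + 1) = insert (k + 1) (Set.Icc 1 k) := by
      ext j; simp; omega
    rw [hI, Set.image_insert_eq, Submodule.span_insert, ← ihk]
    symm
    apply Submodule.eq_of_le_of_finrank_le
    · apply sup_le
      · rw [Submodule.span_singleton_le_iff_mem]; exact hk.1
      · exact hV.2.1 k
    · rw [hV.1 _ h]
      have hlt : V k < span ℂ {x (k + 1)} ⊔ V k := by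
        apply lt_of_le_of_ne le_sup_right
        intro heq
        apply hk.2
        rw [heq]
        exact Submodule.mem_sup_left (Submodule.mem_span_singleton_self _)
      have := Submodule.finrank_lt_finrank_of_lt hlt
      rw [hV.1 k (by omega)] at this
      omega

lemma flag_li {n l : ℕ} {V : ℕ → Submodule ℂ (Fin n → ℂ)} (hV : IsIsoFlag n l V)
    (x : ℕ → Fin n → ℂ) (hx : ∀ k, k < l → x (k + 1) ∈ V (k + 1) ∧ x (k + 1) ∉ V k) :
    LinearIndependent ℂ (fun i : Fin l => x (i + 1)) := by
  rw [linearIndependent_iff_card_eq_finrank_span, Set.finrank]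
  have : Set.range (fun i : Fin l => x (i + 1)) = x '' Set.Icc 1 l := by
    ext y
    constructor
    · rintro ⟨i, rfl⟩
      exact ⟨i + 1, by simp, rfl⟩
    · rintro ⟨j, hj, rfl⟩
      simp at hj
      exact ⟨⟨j - 1, by omega⟩, by simp; congr 1; omega⟩
  rw [this, ← flag_span hV x hx l le_rfl, hV.1 l le_rfl]
  simp

lemma orbit_of {l i : ℕ} {V : ℕ → Submodule ℂ (Fin (2 * l + 1) → ℂ)}
    (hV : IsIsoFlag (2 * l + 1) l V) (x : ℕ → Fin (2 * l + 1) → ℂ)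
    (hx : ∀ k, k < l → x (k + 1) ∈ V (k + 1) ∧ x (k + 1) ∉ V k)
    (g) (hg : g ∈ Kodd l) (hgx : ∀ k, k < l → g (repSOVec l i (k + 1)) = x (k + 1)) :
    InKOddOrbit l (repSOFlag l i) V := by
  refine ⟨g, hg, ?_⟩
  funext k
  have h1 : V k = V (min k l) := by
    rcases le_total k l with h | h
    · rw [min_eq_left h]
    · rw [min_eq_right h, hV.2.2.1 k h]
  rw [h1, flag_span hV x hx _ (min_le_right _ _)]
  simp only [actFlag, repSOFlag, isoFlagOf]
  rw [Submodule.map_span, ← Set.image_comp]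
  congr 1
  apply Set.image_congr
  intro a ha
  simp at ha
  obtain ⟨c, rfl⟩ : ∃ c, a = c + 1 := ⟨a - 1, by omega⟩
  exact hgx c (by omega)

lemma flag_mono {n l : ℕ} {V : ℕ → Submodule ℂ (Fin n → ℂ)} (hV : IsIsoFlag n l V) :
    Monotone V := monotone_nat_of_le_succ hV.2.1

lemma flag_exists {n l : ℕ} {V : ℕ → Submodule ℂ (Fin n → ℂ)} (hV : IsIsoFlag n l V)
    (k : ℕ) (hk : k < l) : ∃ x ∈ V (k + 1), x ∉ V k := by
  by_contra! h
  have h1 : V (k + 1) ≤ V k := h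
  have := Submodule.finrank_mono h1
  rw [hV.1 _ (by omega), hV.1 _ (by omega)] at this
  omega

lemma flag_iso {n l : ℕ} {V : ℕ → Submodule ℂ (Fin n → ℂ)} (hV : IsIsoFlag n l V)
    (x : ℕ → Fin n → ℂ) (hx : ∀ k, k < l → x (k + 1) ∈ V (k + 1) ∧ x (k + 1) ∉ V k)
    (i j : ℕ) (hi : i < l) (hj : j < l) : Bf n (x (i + 1)) (x (j + 1)) = 0 :=
  hV.2.2.2 _ (flag_mono hV hi (hx i hi).1) _ (flag_mono hV hj (hx j hj).1)

lemma exists_closed (m : ℕ) (V : ℕ → Submodule ℂ (Fin (2 * (m + 1) + 1) → ℂ))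
    (hV : IsIsoFlag (2 * (m + 1) + 1) (m + 1) V)
    (hH : ∀ x ∈ V (m + 1), x ⟨m + 1, by omega⟩ = 0) :
    ∃ i : ℕ, i ≤ m + 1 + 1 ∧ InKOddOrbit (m + 1) (repSOFlag (m + 1) i) V := by
  have h : ∀ k, ∃ x, ∀ j, k = j + 1 → j < m + 1 → x ∈ V (j + 1) ∧ x ∉ V j := by
    intro k
    rcases k with _ | j
    · exact ⟨0, by intro j hj; omega⟩
    · by_cases hj : j < m + 1
      · obtain ⟨x, hx⟩ := flag_exists hV j hj
        refine ⟨x, ?_⟩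
        rintro j' h1 -
        obtain rfl : j = j' := by omega
        exact hx
      · exact ⟨0, by intros; omega⟩
  choose x hx' using h
  have hx : ∀ k, k < m + 1 → x (k + 1) ∈ V (k + 1) ∧ x (k + 1) ∉ V k :=
    fun k hk => hx' (k + 1) k rfl hk
  obtain ⟨g, hg, hg0, hgv⟩ := exists_isom_closed (m + 1) (fun i => x (i + 1))
    (flag_li hV x hx) (fun i j => flag_iso hV x hx i j i.2 j.2) (by
      intro i
      rw [Bf_e0]
      exact hH _ (flag_mono hV (by omega) (hx i i.2).1))
  rcases isom_K m g hg hg0 with hK | hK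
  · refine ⟨m + 1, by omega, orbit_of hV x hx g hK ?_⟩
    intro k hk
    rw [repSOVec, if_neg (by omega), if_pos rfl]
    exact hgv ⟨k, hk⟩
  · refine ⟨m + 1 + 1, le_rfl, orbit_of hV x hx _ hK ?_⟩
    intro k hk
    rw [repSOVec, if_neg (by omega), if_neg (by omega), LinearEquiv.trans_apply]
    refine Eq.trans (congrArg g ?_) (hgv ⟨k, hk⟩)
    simp only
    split_ifs with h1
    · rw [sw_std, if_neg (by omega), if_neg (by omega)]
    · rw [sw_std, if_neg (by omega), if_pos rfl]
      congr 1; omega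

lemma exists_open (m i : ℕ) (hi : i < m + 1) (V : ℕ → Submodule ℂ (Fin (2 * (m + 1) + 1) → ℂ))
    (hV : IsIsoFlag (2 * (m + 1) + 1) (m + 1) V)
    (hH : ∀ x ∈ V i, x ⟨m + 1, by omega⟩ = 0)
    (hH' : ∃ x ∈ V (i + 1), x ⟨m + 1, by omega⟩ ≠ 0) :
    InKOddOrbit (m + 1) (repSOFlag (m + 1) i) V := by
  set s : ℂ := (Real.sqrt 2 : ℂ) * Complex.I with hs
  have hss : s * s = -2 := by
    have h1 : (Real.sqrt 2 : ℂ) * (Real.sqrt 2 : ℂ) = 2 := by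
      rw [← Complex.ofReal_mul, Real.mul_self_sqrt (by norm_num)]; norm_num
    rw [hs]
    linear_combination (Complex.I * Complex.I) * h1 + 2 * Complex.I_mul_I
  obtain ⟨y, hy, hy0⟩ := hH'
  have h : ∀ k, ∃ x : Fin (2 * (m + 1) + 1) → ℂ, ∀ j, k = j + 1 → j < m + 1 →
      (x ∈ V (j + 1) ∧ x ∉ V j) ∧ x ⟨m + 1, by omega⟩ = if j = i then s else 0 := by
    intro k
    rcases k with _ | j
    · exact ⟨0, by intro j hj; omega⟩
    · by_cases hj : j < m + 1
      · obtain ⟨x, hx1, hx2⟩ : ∃ x : Fin (2 * (m + 1) + 1) → ℂ, (x ∈ V (j + 1) ∧ x ∉ V j) ∧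
            x ⟨m + 1, by omega⟩ = if j = i then s else 0 := by
          rcases lt_trichotomy j i with hji | hji | hji
          · obtain ⟨x, hx⟩ := flag_exists hV j hj
            refine ⟨x, hx, ?_⟩
            rw [if_neg (by omega)]
            exact hH x (flag_mono hV (by omega) hx.1)
          · subst hji
            have h2 : (s / y ⟨m + 1, by omega⟩) * y ⟨m + 1, by omega⟩ = s := by
              field_simp
            refine ⟨(s / y ⟨m + 1, by omega⟩) • y, ⟨Submodule.smul_mem _ _ hy, ?_⟩, ?_⟩
            · intro hmem
              have h1 := hH _ hmem
              rw [Pi.smul_apply, smul_eq_mul, h2] at h1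
              rw [h1] at hss
              norm_num at hss
            · rw [Pi.smul_apply, smul_eq_mul, h2, if_pos rfl]
          · obtain ⟨x, hx⟩ := flag_exists hV j hj
            have hyj : y ∈ V j := flag_mono hV (by omega) hy
            refine ⟨x - (x ⟨m + 1, by omega⟩ / y ⟨m + 1, by omega⟩) • y, ⟨?_, ?_⟩, ?_⟩
            · exact Submodule.sub_mem _ hx.1 (Submodule.smul_mem _ _ (hV.2.1 j hyj))
            · intro hmem
              apply hx.2
              have := Submodule.add_mem _ hmem (Submodule.smul_mem _
                (x ⟨m + 1, by omega⟩ / y ⟨m + 1, by omega⟩) hyj)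
              simpa using this
            · rw [if_neg (by omega)]
              simp only [Pi.sub_apply, Pi.smul_apply, smul_eq_mul]
              field_simp
              simp
        refine ⟨x, ?_⟩
        rintro j' h1 -
        obtain rfl : j = j' := by omega
        exact ⟨hx1, hx2⟩
      · exact ⟨0, by intros; omega⟩
  choose x hx' using h
  have hx : ∀ k, k < m + 1 → x (k + 1) ∈ V (k + 1) ∧ x (k + 1) ∉ V k :=
    fun k hk => (hx' (k + 1) k rfl hk).1
  have hx0 : ∀ k, k < m + 1 → Bf _ (x (k + 1)) (e0 _) = if k = i then s else 0 :=
    fun k hk => by rw [Bf_e0]; exact (hx' (k + 1) k rfl hk).2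
  have hli := flag_li hV x hx
  have hiso := flag_iso hV x hx
  let f : Fin m → Fin (m + 1) := fun j => if (j : ℕ) < i then j.castSucc else j.succ
  have hfi : ∀ j, (f j : ℕ) ≠ i := by
    intro j
    simp only [f]
    split_ifs <;> simp <;> omega
  have hfinj : Function.Injective f := by
    intro a b hab
    simp only [f] at hab
    rw [Fin.ext_iff] at hab ⊢
    split_ifs at hab <;> simp at hab <;> omega
  set u := x (i + 1) - s • e0 (m + 1) with hu
  obtain ⟨g, hg, hg0, hgv, hgu⟩ := exists_isom_open m (fun j => x (f j + 1)) u
    (hli.comp f hfinj) (fun a b => hiso _ _ (f a).2 (f b).2)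
    (by intro j; rw [hx0 _ (f j).2, if_neg (hfi j)])
    (by
      intro j
      rw [hu, map_sub, map_smul, hx0 _ (f j).2, if_neg (hfi j), hiso _ _ (f j).2 hi]
      simp)
    (by
      rw [hu, map_sub, LinearMap.sub_apply, hx0 i hi, map_smul, LinearMap.smul_apply, Bf_e0_e0]
      simp)
    (by
      have h1 : Bf _ (e0 _) (x (i + 1)) = s := by rw [Bf_comm, hx0 i hi, if_pos rfl]
      have h2 : Bf _ (x (i + 1)) (e0 _) = s := by rw [hx0 i hi, if_pos rfl]
      rw [hu]
      simp only [map_sub, map_smul, LinearMap.sub_apply, LinearMap.smul_apply, h1, h2, Bf_e0_e0,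
        hiso i i hi hi, smul_eq_mul]
      linear_combination -hss)
  have hrep : ∀ k, k < m + 1 → g (repSOVec (m + 1) i (k + 1)) = x (k + 1) := by
    intro k hk
    rw [repSOVec, if_pos (by omega)]
    split_ifs with h1 h2
    · have := hgv ⟨k, by omega⟩
      simp only [f] at this
      rw [if_pos (by omega)] at this
      simpa using this
    · rw [wvec, map_add, map_add, map_smul, ← hs, h2]
      have h3 : x (i + 1) = u + s • e0 (m + 1) := by rw [hu]; simp
      rw [h3, ← hgu]
      change _ + s • g (e0 _) + _ = _
      rw [hg0]
      abel
    · have := hgv ⟨k - 1, by omega⟩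
      simp only [f] at this
      rw [if_neg (by omega)] at this
      have e1 : k - 1 + 1 = k := by omega
      simp only [e1, Fin.val_succ] at this
      simpa using this
  rcases isom_K m g hg hg0 with hK | hK
  · exact orbit_of hV x hx g hK hrep
  · refine orbit_of hV x hx _ hK fun k hk => ?_
    rw [← hrep k hk, LinearEquiv.trans_apply]
    congr 1
    rw [repSOVec, if_pos (by omega)]
    split_ifs with h1 h2
    · rw [sw_std, if_neg (by omega), if_neg (by omega)]
    · rw [wvec, map_add, map_add, map_smul, sw_std, sw_std, sw_std]
      simp only [if_true]
      rw [if_neg (by omega), if_neg (by omega), if_neg (by omega)]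
      change _ = _ + _ + stdVec _ (m + 3)
      abel
    · rw [sw_std, if_neg (by omega), if_neg (by omega)]

/-! ### Uniqueness -/

lemma K_coord {l : ℕ} {g} (hg : g ∈ Kodd l) (x) :
    g x ⟨l, by omega⟩ = x ⟨l, by omega⟩ := by
  have h := hg.1.2 x (e0 l)
  rw [hg.2] at h
  change Bf _ (g x) (e0 l) = Bf _ x (e0 l) at h
  rwa [Bf_e0, Bf_e0] at h

lemma wvec_coord (l : ℕ) : wvec l ⟨l, by omega⟩ ≠ 0 := by
  simp [wvec, stdVec_apply]

lemma rep_coord (m i j : ℕ) (hij : i < j) (hi : i ≤ m) (y)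
    (hy : y ∈ repSOFlag (m + 1) j (i + 1)) : y ⟨m + 1, by omega⟩ = 0 := by
  unfold repSOFlag isoFlagOf at hy
  induction hy using Submodule.span_induction with
  | mem x hx =>
    obtain ⟨a, ha, rfl⟩ := hx
    simp at ha
    unfold repSOVec
    split_ifs <;> first | omega | (rw [stdVec_apply, if_neg]; simp only; omega)
  | zero => simp
  | add x y _ _ hx hy => simp [hx, hy]
  | smul c x _ hx => simp [hx]

lemma rep_minus (m : ℕ) (y) (hy : y ∈ repSOFlag (m + 1) (m + 1 + 1) (m + 1))
    (k : Fin (2 * (m + 1) + 1)) (hk : m + 1 ≤ (k : ℕ)) : sw m y k = 0 := by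
  unfold repSOFlag isoFlagOf at hy
  induction hy using Submodule.span_induction with
  | mem x hx =>
    obtain ⟨a, ha, rfl⟩ := hx
    simp at ha
    rw [repSOVec, if_neg (by omega), if_neg (by omega)]
    split_ifs with h1
    · rw [sw_std, stdVec_apply, if_neg]
      split_ifs <;> omega
    · rw [sw_std, stdVec_apply, if_neg]
      split_ifs <;> omega
  | zero => simp
  | add x y _ _ hx hy => simp [hx, hy]
  | smul c x _ hx => simp [hx]

lemma unique_aux (m i j : ℕ) (hij : i < j) (hj : j ≤ m + 1 + 1)
    (V : ℕ → Submodule ℂ (Fin (2 * (m + 1) + 1) → ℂ))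
    (h1 : InKOddOrbit (m + 1) (repSOFlag (m + 1) i) V)
    (h2 : InKOddOrbit (m + 1) (repSOFlag (m + 1) j) V) : False := by
  obtain ⟨g, hg, rfl⟩ := h1
  obtain ⟨h, hh, heq⟩ := h2
  have key : ∀ k, ∀ x ∈ repSOFlag (m + 1) i k, h.symm (g x) ∈ repSOFlag (m + 1) j k := by
    intro k x hx
    have h3 : g x ∈ actFlag _ h (repSOFlag (m + 1) j) k := by
      rw [heq]; exact Submodule.mem_map_of_mem hx
    obtain ⟨y, hy, hyx⟩ := h3
    rw [← hyx]
    simpa using hy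
  by_cases hi : i ≤ m
  · have hw : wvec (m + 1) ∈ repSOFlag (m + 1) i (i + 1) := by
      apply Submodule.subset_span
      refine ⟨i + 1, ?_, ?_⟩
      · simp; omega
      · rw [repSOVec, if_pos (by omega), if_neg (by omega), if_pos rfl]
    have h4 := rep_coord m i j hij hi _ (key _ _ hw)
    rw [← K_coord hh (h.symm _), LinearEquiv.apply_symm_apply, K_coord hg] at h4
    exact wvec_coord _ h4
  · obtain rfl : i = m + 1 := by omega
    obtain rfl : j = m + 1 + 1 := by omega
    have hsymm : IsIsom _ h.symm := by
      intro x y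
      have := hh.1.2 (h.symm x) (h.symm y)
      rw [LinearEquiv.apply_symm_apply, LinearEquiv.apply_symm_apply] at this
      exact this.symm
    have hdet := det_eq_one (m + 1) ((g.trans h.symm).trans (sw m))
      (fun x y => ((sw_isom m _ _).trans (hsymm _ _)).trans (hg.1.2 x y))
      (by
        change sw m (h.symm (g (e0 _))) = _
        have a1 : g (e0 (m + 1)) = e0 (m + 1) := hg.2
        have a2 : h.symm (e0 (m + 1)) = e0 (m + 1) := by
          rw [LinearEquiv.symm_apply_eq]; exact hh.2.symm
        rw [a1, a2, sw_e0])
      (by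
        intro a k hk
        apply rep_minus m _ _ k hk
        apply key
        apply Submodule.subset_span
        refine ⟨a + 1, ?_, ?_⟩
        · simp; omega
        · rw [repSOVec, if_neg (by omega), if_pos rfl])
    have hinv : LinearMap.det h.symm.toLinearMap = 1 := by
      have := LinearEquiv.det_mul_det_symm h
      rw [hh.1.1, one_mul] at this
      exact this
    rw [LinearEquiv.coe_trans, LinearEquiv.coe_trans, LinearMap.det_comp, LinearMap.det_comp,
      sw_det, hinv, hg.1.1] at hdet
    norm_num at hdet

/-- Every maximal isotropic flag in `ℂ^{2l+1}` lies in the `K`-orbit of exactly one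
of the `l+2` flags `F_0, …, F_{l-1}, F_+, F_-` (indexed here by `i ≤ l + 1`, with
`i = l` giving `F_+` and `i = l + 1` giving `F_-`). -/
theorem stmt_3 (l : ℕ) (hl : 2 ≤ l) (V : ℕ → Submodule ℂ (Fin (2 * l + 1) → ℂ))
    (hV : IsIsoFlag (2 * l + 1) l V) :
    ∃! i : ℕ, i ≤ l + 1 ∧ InKOddOrbit l (repSOFlag l i) V := by
  obtain ⟨m, rfl⟩ : ∃ m, l = m + 1 := ⟨l - 1, by omega⟩
  have hex : ∃ i : ℕ, i ≤ m + 1 + 1 ∧ InKOddOrbit (m + 1) (repSOFlag (m + 1) i) V := by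
    by_cases hH : ∀ x ∈ V (m + 1), x ⟨m + 1, by omega⟩ = 0
    · exact exists_closed m V hV hH
    · classical
      have hP : ∃ k, ∃ x ∈ V k, x ⟨m + 1, by omega⟩ ≠ 0 := by
        push Not at hH
        exact ⟨m + 1, hH⟩
      have hfind := Nat.find_spec hP
      have hmin := fun k => Nat.find_min hP (m := k)
      have hle : Nat.find hP ≤ m + 1 := by
        apply Nat.find_min'
        push Not at hH
        exact hH
      rcases hk : Nat.find hP with _ | i
      · rw [hk] at hfind
        obtain ⟨x, hx, hx0⟩ := hfind
        have h0 := hV.1 0 (by omega)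
        rw [Submodule.finrank_eq_zero] at h0
        rw [h0, Submodule.mem_bot] at hx
        exact absurd (by rw [hx]; rfl) hx0
      · rw [hk] at hfind hle hmin
        refine ⟨i, by omega, exists_open m i (by omega) V hV ?_ hfind⟩
        intro x hx
        by_contra hne
        exact hmin i (by omega) ⟨x, hx, hne⟩
  obtain ⟨i, hi, hiV⟩ := hex
  refine ⟨i, ⟨hi, hiV⟩, ?_⟩
  rintro j ⟨hj, hjV⟩
  rcases lt_trichotomy j i with h | h | h
  · exact (unique_aux m j i h hi V hjV hiV).elim
  · exact h
  · exact (unique_aux m i j h hj V hiV hjV).elim
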